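/- The odd elements δ_1 and δ_2 of W ⊗ U(g) satisfy the super-commutator relations [δ_1, δ_2] + [δ_2, δ_1] = −[δ_1, δ_1] and [δ_2, δ_2] = 0. Consequently the operator δ = δ_1 + δ_2 satisfies δ² = 0. -/

import Mathlib

set_option synthInstance.maxHeartbeats 1000000
set_option maxHeartbeats 1000000

/-!
STATEMENT 4: the odd elements `δ₁, δ₂ ∈ W ⊗ U(g)` satisfy
`[δ₁, δ₂] + [δ₂, δ₁] = -[δ₁, δ₁]` and `[δ₂, δ₂] = 0`; consequently `δ = δ₁ + δ₂`
satisfies `δ² = 0`.  (For odd elements `x, y` the super-commutator is `[x,y] = xy + yx`.)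

We present the super tensor product `W ⊗ U(g)` by generators `X a, ∂ a` (the Weyl
superalgebra `W = W_{Πg*}`, parity `p a + 1`) and `E a` (`U(g)`, parity `p a`), with the
two factors super-commuting; `g` has homogeneous basis `{E_a}_{a∈Λ}` and structure
constants `f a b c = ad(E_a)_{bc}`, subject to the Lie superalgebra axioms `hpar`,
`hskew`, `hjac`.
-/

noncomputable section

/-- The sign `(-1)^ε` for `ε : ℤ/2`. -/
noncomputable def sgn (ε : ZMod 2) : ℂ := if ε = 0 then 1 else -1

/-- Generators of the superalgebra `W ⊗ U(g)`: the generators `X a`, `∂ a` of the Weyl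
superalgebra `W = W_{Πg*}` and the generators `E a` of `U(g)`. -/
inductive WUGen (Λ : Type) : Type
  | X : Λ → WUGen Λ
  | D : Λ → WUGen Λ
  | E : Λ → WUGen Λ

variable {Λ : Type} [DecidableEq Λ] [Fintype Λ]

/-- The parity of the generators: `[X a] = [∂ a] = p a + 1`, `[E a] = p a`. -/
def WUGen.parity (p : Λ → ZMod 2) : WUGen Λ → ZMod 2
  | .X a => p a + 1
  | .D a => p a + 1
  | .E a => p a

/-- The defining relations of `W ⊗ U(g)` (the super tensor product of the Weyl superalgebra
`W_{Πg*}` and the universal enveloping superalgebra `U(g)`): the super-Weyl relations among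
the `X a, ∂ a`, the relations `E_aE_b - (-1)^{[E_a][E_b]}E_bE_a = [E_a,E_b] = Σ_e f a e b E_e`
of `U(g)`, and super-commutation of the two tensor factors. -/
inductive WURel (p : Λ → ZMod 2) (f : Λ → Λ → Λ → ℂ) :
    FreeAlgebra ℂ (WUGen Λ) → FreeAlgebra ℂ (WUGen Λ) → Prop
  | XX (a b : Λ) : WURel p f
      (FreeAlgebra.ι ℂ (WUGen.X a) * FreeAlgebra.ι ℂ (WUGen.X b))
      (sgn ((p a + 1) * (p b + 1)) •
        (FreeAlgebra.ι ℂ (WUGen.X b) * FreeAlgebra.ι ℂ (WUGen.X a)))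
  | DD (a b : Λ) : WURel p f
      (FreeAlgebra.ι ℂ (WUGen.D a) * FreeAlgebra.ι ℂ (WUGen.D b))
      (sgn ((p a + 1) * (p b + 1)) •
        (FreeAlgebra.ι ℂ (WUGen.D b) * FreeAlgebra.ι ℂ (WUGen.D a)))
  | DX (a b : Λ) : WURel p f
      (FreeAlgebra.ι ℂ (WUGen.D a) * FreeAlgebra.ι ℂ (WUGen.X b))
      (sgn ((p a + 1) * (p b + 1)) •
        (FreeAlgebra.ι ℂ (WUGen.X b) * FreeAlgebra.ι ℂ (WUGen.D a)) +
        if a = b then 1 else 0)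
  | EE (a b : Λ) : WURel p f
      (FreeAlgebra.ι ℂ (WUGen.E a) * FreeAlgebra.ι ℂ (WUGen.E b))
      (sgn (p a * p b) •
        (FreeAlgebra.ι ℂ (WUGen.E b) * FreeAlgebra.ι ℂ (WUGen.E a)) +
        ∑ e : Λ, f a e b • FreeAlgebra.ι ℂ (WUGen.E e))
  | EX (a b : Λ) : WURel p f
      (FreeAlgebra.ι ℂ (WUGen.E a) * FreeAlgebra.ι ℂ (WUGen.X b))
      (sgn (p a * (p b + 1)) •
        (FreeAlgebra.ι ℂ (WUGen.X b) * FreeAlgebra.ι ℂ (WUGen.E a)))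
  | ED (a b : Λ) : WURel p f
      (FreeAlgebra.ι ℂ (WUGen.E a) * FreeAlgebra.ι ℂ (WUGen.D b))
      (sgn (p a * (p b + 1)) •
        (FreeAlgebra.ι ℂ (WUGen.D b) * FreeAlgebra.ι ℂ (WUGen.E a)))

/-- The superalgebra `W ⊗ U(g)`. -/
abbrev WU (p : Λ → ZMod 2) (f : Λ → Λ → Λ → ℂ) : Type := RingQuot (WURel p f)

/-- The image of a generator in `W ⊗ U(g)`. -/
noncomputable def genWU (p : Λ → ZMod 2) (f : Λ → Λ → Λ → ℂ) (s : WUGen Λ) : WU p f :=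
  RingQuot.mkAlgHom ℂ (WURel p f) (FreeAlgebra.ι ℂ s)

/-- `X a ⊗ 1`. -/
noncomputable def XU (p : Λ → ZMod 2) (f : Λ → Λ → Λ → ℂ) (a : Λ) : WU p f :=
  genWU p f (WUGen.X a)

/-- `∂ a ⊗ 1`. -/
noncomputable def DU (p : Λ → ZMod 2) (f : Λ → Λ → Λ → ℂ) (a : Λ) : WU p f :=
  genWU p f (WUGen.D a)

/-- `1 ⊗ E a`. -/
noncomputable def EU (p : Λ → ZMod 2) (f : Λ → Λ → Λ → ℂ) (a : Λ) : WU p f :=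
  genWU p f (WUGen.E a)

/-- The homogeneous subspace of `W ⊗ U(g)` of parity `ε`: the span of all products of
generators of total parity `ε`. -/
noncomputable def WUpar (p : Λ → ZMod 2) (f : Λ → Λ → Λ → ℂ) (ε : ZMod 2) :
    Submodule ℂ (WU p f) :=
  Submodule.span ℂ
    {w | ∃ l : List (WUGen Λ),
      w = (l.map (genWU p f)).prod ∧ (l.map (WUGen.parity p)).sum = ε}

/-- `Γ_a = Γ(E_a) = -Σ_{b,c} (-1)^{[E_a][E_c]} X_c ad(E_a)_{bc} ∂_b ∈ W ⊗ U(g)`. -/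
noncomputable def GamU (p : Λ → ZMod 2) (f : Λ → Λ → Λ → ℂ) (a : Λ) : WU p f :=
  -∑ b : Λ, ∑ c : Λ, (sgn (p a * p c) * f a b c) • (XU p f c * DU p f b)

/-- `δ₁ = Σ_a (-1)^{[E_a]} X_a ⊗ E_a`. -/
noncomputable def delta1 (p : Λ → ZMod 2) (f : Λ → Λ → Λ → ℂ) : WU p f :=
  ∑ a : Λ, sgn (p a) • (XU p f a * EU p f a)

/-- `δ₂ = (1/2) Σ_a (-1)^{[E_a]} X_a Γ_a ⊗ 1`. -/
noncomputable def delta2 (p : Λ → ZMod 2) (f : Λ → Λ → Λ → ℂ) : WU p f :=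
  (1 / 2 : ℂ) • ∑ a : Λ, sgn (p a) • (XU p f a * GamU p f a)

/-- `δ = δ₁ + δ₂`. -/
noncomputable def deltaWU (p : Λ → ZMod 2) (f : Λ → Λ → Λ → ℂ) : WU p f :=
  delta1 p f + delta2 p f

/-!
The element `δ₁` is the generic element of `g`. Its square is expressed through quadratic
polynomials `Q_d` in the coordinates, `[δ₁, δ₁] = -Σ_d Q_d E_d`, and the same polynomials are the
coefficients of the vector field `δ₂ = ½ Σ_d (-1)^{[E_d]} Q_d ∂_d`. Since `[δ₁, X_d] = 0` and
`[δ₁, ∂_d] = E_d`, this gives `[δ₁, δ₂] = ½ Σ_d Q_d E_d = -½ [δ₁, δ₁]`.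

For `[δ₂, δ₂] = 0`, let `L = ad δ₁`, a matrix with entries linear in the coordinates, so that
`Q_d = Σ_c X_c L_{dc}` and `[∂_b, Q_d] = 2 L_{db}`. Everything reduces to the vanishing of
`S_d = Σ_b (-1)^{[E_b]} Q_b L_{db}`. Applied to the generic element, the Jacobi identity reads
`2 (ad δ₁)² = ad [δ₁, δ₁]`; contracting it with the coordinates gives `2 S_d = -S_d`.
-/

theorem sgn_zero : sgn 0 = 1 := if_pos rfl

theorem sgn_one : sgn 1 = -1 := if_neg one_ne_zero

theorem sgn_add (u v : ZMod 2) : sgn (u + v) = sgn u * sgn v := by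
  have h_cases (w : ZMod 2) : w = 0 ∨ w = 1 := by decide +revert
  rcases h_cases u with rfl | rfl <;> rcases h_cases v with rfl | rfl <;>
    simp [sgn_zero, sgn_one, CharTwo.add_self_eq_zero]

theorem sgn_mul_sgn_self (u : ZMod 2) : sgn u * sgn u = 1 := by
  rw [← sgn_add, CharTwo.add_self_eq_zero, sgn_zero]

theorem sgn_add_one_mul_add_one (u v : ZMod 2) :
    sgn ((u + 1) * (v + 1)) = -(sgn u * sgn v * sgn (u * v)) := by
  rw [add_one_mul, mul_add_one, sgn_add, sgn_add, sgn_add, sgn_one]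
  ring

theorem add_one_add_self (u : ZMod 2) : u + 1 + u = 1 := by
  decide +revert

theorem self_add_add_one (u : ZMod 2) : u + (u + 1) = 1 := by
  decide +revert

section SuperCommutator

variable {A : Type*} [Ring A] [Algebra ℂ A]

/-- The super-commutator `[x, y] = x y - (-1)^{u v} y x` of elements `x` of parity `u` and `y` of
parity `v`. The parities are explicit arguments, so that no grading of `A` is needed and the
super-commutator is bilinear. -/
def superComm (u v : ZMod 2) : A →ₗ[ℂ] A →ₗ[ℂ] A :=
  LinearMap.mul ℂ A - sgn (u * v) • (LinearMap.mul ℂ A).flip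

theorem superComm_apply (u v : ZMod 2) (x y : A) :
    superComm u v x y = x * y - sgn (u * v) • (y * x) := rfl

theorem superComm_eq_iff {u v : ZMod 2} {x y z : A} :
    superComm u v x y = z ↔ x * y = sgn (u * v) • (y * x) + z := by
  rw [superComm_apply, sub_eq_iff_eq_add']

theorem superComm_one_one (x y : A) : superComm 1 1 x y = x * y + y * x := by
  rw [superComm_apply, mul_one, sgn_one, neg_one_smul, sub_neg_eq_add]

theorem superComm_swap (u v : ZMod 2) (x y : A) :
    superComm v u y x = -(sgn (u * v) • superComm u v x y) := by
  rw [superComm_apply, superComm_apply, smul_sub, smul_smul, sgn_mul_sgn_self, one_smul, neg_sub,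
    mul_comm v u]

theorem superComm_mul_right {v w t : ZMod 2} (ht : v + w = t) (u : ZMod 2) (x y z : A) :
    superComm u t x (y * z) =
      superComm u v x y * z + sgn (u * v) • (y * superComm u w x z) := by
  subst ht
  simp only [superComm_apply, mul_add, sgn_add, sub_mul, mul_sub, smul_sub, smul_mul_assoc,
    mul_smul_comm, smul_smul, mul_assoc]
  abel

theorem superComm_mul_left {u v t : ZMod 2} (ht : u + v = t) (w : ZMod 2) (x y z : A) :
    superComm t w (x * y) z =
      x * superComm v w y z + sgn (v * w) • (superComm u w x z * y) := by
  subst ht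
  simp only [superComm_apply, add_mul, sgn_add, sub_mul, mul_sub, smul_sub, smul_mul_assoc,
    mul_smul_comm, smul_smul, mul_assoc, mul_comm (sgn (u * w))]
  abel

end SuperCommutator

section Relations

variable {ι A : Type*} [DecidableEq ι] [Ring A] [Algebra ℂ A]

/-- `X` and `D` satisfy the relations of the Weyl superalgebra `W_{Πg*}`: coordinates and partial
derivatives with `X a` and `D a` of parity `p a + 1`. -/
structure IsSuperWeyl (p : ι → ZMod 2) (X D : ι → A) : Prop where
  XX (a b : ι) : superComm (p a + 1) (p b + 1) (X a) (X b) = 0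
  DD (a b : ι) : superComm (p a + 1) (p b + 1) (D a) (D b) = 0
  DX (a b : ι) : superComm (p a + 1) (p b + 1) (D a) (X b) = if a = b then 1 else 0

/-- `X`, `D` and `E` satisfy the relations of `W_{Πg*} ⊗ U(g)`, where `E a` has parity `p a`. -/
structure IsSuperWeylEnveloping [Fintype ι] (p : ι → ZMod 2) (f : ι → ι → ι → ℂ)
    (X D E : ι → A) : Prop extends IsSuperWeyl p X D where
  EE (a b : ι) : superComm (p a) (p b) (E a) (E b) = ∑ e, f a e b • E e
  EX (a b : ι) : superComm (p a) (p b + 1) (E a) (X b) = 0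
  ED (a b : ι) : superComm (p a) (p b + 1) (E a) (D b) = 0

theorem IsSuperWeyl.XD {p : ι → ZMod 2} {X D : ι → A} (hW : IsSuperWeyl p X D) (a b : ι) :
    superComm (p a + 1) (p b + 1) (X a) (D b) = if a = b then sgn (p a) • 1 else 0 := by
  have h_sign (u : ZMod 2) : -sgn ((u + 1) * (u + 1)) = sgn u := by
    rw [show (u + 1) * (u + 1) = u + 1 by decide +revert, sgn_add, sgn_one, mul_neg_one, neg_neg]
  rw [superComm_swap, hW.DX]
  rcases eq_or_ne a b with rfl | hab
  · rw [if_pos rfl, if_pos rfl, ← neg_smul, h_sign]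
  · rw [if_neg hab.symm, if_neg hab, smul_zero, neg_zero]

theorem IsSuperWeylEnveloping.XE [Fintype ι] {p : ι → ZMod 2} {f : ι → ι → ι → ℂ} {X D E : ι → A}
    (hU : IsSuperWeylEnveloping p f X D E) (a b : ι) :
    superComm (p a + 1) (p b) (X a) (E b) = 0 := by
  rw [superComm_swap, hU.EX, smul_zero, neg_zero]

end Relations

/-- `f a b c = ad(E_a)_{bc}` are the structure constants of a Lie superalgebra with respect to a
homogeneous basis `E` with parities `p`. -/
structure IsLieSuperalgebra {ι : Type*} [Fintype ι] (p : ι → ZMod 2) (f : ι → ι → ι → ℂ) :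
    Prop where
  parity (a b c : ι) : f a b c ≠ 0 → p b = p a + p c
  skew (a b c : ι) : f a b c = -sgn (p a * p c) * f c b a
  jacobi (a b c d : ι) : ∑ e, f b e c * f a d e =
    ∑ e, f a e b * f e d c + sgn (p a * p b) * ∑ e, f a e c * f b d e

theorem IsLieSuperalgebra.sgn_mul_eq {ι : Type*} [Fintype ι] {p : ι → ZMod 2}
    {f : ι → ι → ι → ℂ} (hL : IsLieSuperalgebra p f) (a b c : ι) :
    sgn (p b) * f a b c = sgn (p a) * sgn (p c) * f a b c := by
  rcases eq_or_ne (f a b c) 0 with h | h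
  · rw [h, mul_zero, mul_zero]
  · rw [hL.parity a b c h, sgn_add]

section Definitions

variable {ι A : Type*} [Fintype ι] [Ring A] [Algebra ℂ A]

/-- The generic element `Σ_a (-1)^{[E_a]} X_a E_a` of `g`, which is `δ₁`. -/
def genericElement (p : ι → ZMod 2) (X E : ι → A) : A :=
  ∑ a, sgn (p a) • (X a * E a)

/-- The `(b, c)` entry `Σ_a (-1)^{[E_a]} ad(E_a)_{bc} X_a` of the matrix by which the generic
element `δ₁` acts on `g`. -/
def adGeneric (p : ι → ZMod 2) (f : ι → ι → ι → ℂ) (X : ι → A) (b c : ι) : A :=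
  ∑ a, (sgn (p a) * f a b c) • X a

/-- The quadratic polynomials `Q_d` in the coordinates `X_a`, normalised such that
`[δ₁, δ₁] = -Σ_d Q_d E_d`. -/
def genericSquare (p : ι → ZMod 2) (f : ι → ι → ι → ℂ) (X : ι → A) (d : ι) : A :=
  ∑ c, X c * adGeneric p f X d c

/-- The homological (Chevalley–Eilenberg) vector field `½ Σ_d (-1)^{[E_d]} Q_d ∂_d` on `Πg`, which
is `δ₂`. -/
def homologicalField (p : ι → ZMod 2) (f : ι → ι → ι → ℂ) (X D : ι → A) : A :=
  (1 / 2 : ℂ) • ∑ d, sgn (p d) • (genericSquare p f X d * D d)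

end Definitions

section GenericElement

variable {ι A : Type*} [Fintype ι] [Ring A] [Algebra ℂ A] {p : ι → ZMod 2}
  {f : ι → ι → ι → ℂ} {X D E : ι → A}

theorem superComm_genericElement (v : ZMod 2) (y : A) :
    superComm 1 v (genericElement p X E) y = ∑ a, sgn (p a) •
      (X a * superComm (p a) v (E a) y +
        sgn (p a * v) • (superComm (p a + 1) v (X a) y * E a)) := by
  rw [genericElement, map_sum, LinearMap.sum_apply]
  refine Finset.sum_congr rfl fun a _ => ?_
  rw [map_smul, LinearMap.smul_apply, superComm_mul_left (add_one_add_self (p a))]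

variable [DecidableEq ι]

theorem superComm_genericElement_X (hU : IsSuperWeylEnveloping p f X D E) (b : ι) :
    superComm 1 (p b + 1) (genericElement p X E) (X b) = 0 := by
  simp only [superComm_genericElement, hU.EX, hU.XX, mul_zero, zero_mul, smul_zero, add_zero,
    Finset.sum_const_zero]

theorem superComm_genericElement_E (hU : IsSuperWeylEnveloping p f X D E) (b : ι) :
    superComm 1 (p b) (genericElement p X E) (E b) = ∑ e, adGeneric p f X e b * E e := by
  simp only [superComm_genericElement, hU.EE, hU.XE, adGeneric, zero_mul, smul_zero,
    add_zero, Finset.mul_sum, Finset.sum_mul, Finset.smul_sum, mul_smul_comm, smul_mul_assoc,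
    smul_smul]
  exact Finset.sum_comm

theorem superComm_genericElement_D (hU : IsSuperWeylEnveloping p f X D E) (b : ι) :
    superComm 1 (p b + 1) (genericElement p X E) (D b) = E b := by
  have h_sign (u : ZMod 2) : sgn (u * (u + 1)) = 1 := by
    rw [show u * (u + 1) = 0 by decide +revert, sgn_zero]
  simp only [superComm_genericElement, hU.ED, hU.XD, mul_zero, zero_add, ite_mul,
    zero_mul, smul_ite, smul_zero, Finset.sum_ite_eq', Finset.mem_univ, if_true]
  rw [h_sign, one_smul, smul_one_mul, smul_smul, sgn_mul_sgn_self, one_smul]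

theorem superComm_genericElement_self (hU : IsSuperWeylEnveloping p f X D E) :
    superComm 1 1 (genericElement p X E) (genericElement p X E) =
      -∑ d, genericSquare p f X d * E d := by
  have h_term (b : ι) : superComm 1 1 (genericElement p X E) (sgn (p b) • (X b * E b)) =
      -(X b * ∑ e, adGeneric p f X e b * E e) := by
    rw [map_smul, superComm_mul_right (add_one_add_self (p b)), superComm_genericElement_X hU,
      superComm_genericElement_E hU, zero_mul, zero_add, one_mul, smul_smul, sgn_add, ← mul_assoc,
      sgn_mul_sgn_self, sgn_one, one_mul, neg_one_smul]
  calc superComm 1 1 (genericElement p X E) (genericElement p X E)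
      = ∑ b, superComm 1 1 (genericElement p X E) (sgn (p b) • (X b * E b)) := by
        rw [← map_sum, ← genericElement]
    _ = -∑ b, ∑ e, X b * adGeneric p f X e b * E e := by
        simp only [h_term, Finset.sum_neg_distrib, Finset.mul_sum, mul_assoc]
    _ = -∑ d, genericSquare p f X d * E d := by
        rw [Finset.sum_comm]
        simp only [genericSquare, Finset.sum_mul]

end GenericElement

section Jacobi

variable {ι A : Type*} [Fintype ι] [Ring A] [Algebra ℂ A] {p : ι → ZMod 2}
  {f : ι → ι → ι → ℂ} {X D : ι → A}

theorem superComm_adGeneric (hL : IsLieSuperalgebra p f) (u : ZMod 2) (y : A) (d c : ι) :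
    superComm u (p d + p c + 1) y (adGeneric p f X d c) =
      ∑ a, (sgn (p a) * f a d c) • superComm u (p a + 1) y (X a) := by
  rw [adGeneric, map_sum]
  refine Finset.sum_congr rfl fun a _ => ?_
  rw [map_smul]
  rcases eq_or_ne (f a d c) 0 with h | h
  · rw [h, mul_zero, zero_smul, zero_smul]
  · rw [hL.parity a d c h, add_assoc (p a), CharTwo.add_self_eq_zero, add_zero]

theorem superComm_genericSquare (u : ZMod 2) (y : A) (d : ι) :
    superComm u (p d) y (genericSquare p f X d) =
      ∑ c, (superComm u (p c + 1) y (X c) * adGeneric p f X d c +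
        sgn (u * (p c + 1)) • (X c * superComm u (p d + p c + 1) y (adGeneric p f X d c))) := by
  have h_parity (v w : ZMod 2) : w + 1 + (v + w + 1) = v := by decide +revert
  rw [genericSquare, map_sum]
  refine Finset.sum_congr rfl fun c _ => ?_
  rw [superComm_mul_right (h_parity (p d) (p c))]

theorem superComm_genericSquare_eq_zero (hL : IsLieSuperalgebra p f) {u : ZMod 2} {y : A}
    (hy : ∀ a, superComm u (p a + 1) y (X a) = 0) (d : ι) :
    superComm u (p d) y (genericSquare p f X d) = 0 := by
  simp only [superComm_genericSquare, superComm_adGeneric hL, hy, zero_mul, smul_zero, mul_zero,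
    Finset.sum_const_zero, add_zero]

variable [DecidableEq ι]

theorem superComm_D_genericSquare (hL : IsLieSuperalgebra p f) (hW : IsSuperWeyl p X D)
    (b d : ι) :
    superComm (p b + 1) (p d) (D b) (genericSquare p f X d) = (2 : ℂ) • adGeneric p f X d b := by
  have h_skew (c : ι) :
      sgn ((p b + 1) * (p c + 1)) * (sgn (p b) * f b d c) = sgn (p c) * f c d b := by
    rw [hL.skew c d b, sgn_add_one_mul_add_one, mul_comm (p b) (p c)]
    linear_combination
      (-sgn (p c) * sgn (p c * p b) * f b d c) * sgn_mul_sgn_self (p b)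
  have h_term (c : ι) :
      superComm (p b + 1) (p c + 1) (D b) (X c) * adGeneric p f X d c +
        sgn ((p b + 1) * (p c + 1)) •
          (X c * superComm (p b + 1) (p d + p c + 1) (D b) (adGeneric p f X d c)) =
      (if b = c then adGeneric p f X d c else 0) + (sgn (p c) * f c d b) • X c := by
    simp only [superComm_adGeneric hL, hW.DX, ite_mul, one_mul, zero_mul, smul_ite, smul_zero,
      Finset.sum_ite_eq, Finset.mem_univ, if_true, mul_smul_comm, mul_one, smul_smul, h_skew]
  simp only [superComm_genericSquare, h_term, Finset.sum_add_distrib, Finset.sum_ite_eq,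
    Finset.mem_univ, if_true]
  rw [two_smul, ← adGeneric]

theorem superComm_X_genericSquare (hL : IsLieSuperalgebra p f) (hW : IsSuperWeyl p X D)
    (b d : ι) : superComm (p b + 1) (p d) (X b) (genericSquare p f X d) = 0 :=
  superComm_genericSquare_eq_zero hL (hW.XX b) d

theorem superComm_genericSquare_genericSquare (hL : IsLieSuperalgebra p f)
    (hW : IsSuperWeyl p X D) (b d : ι) :
    superComm (p b) (p d) (genericSquare p f X b) (genericSquare p f X d) = 0 := by
  refine superComm_genericSquare_eq_zero hL (fun a => ?_) d
  rw [superComm_swap, superComm_X_genericSquare hL hW, smul_zero, neg_zero]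

theorem superComm_genericSquare_D (hL : IsLieSuperalgebra p f) (hW : IsSuperWeyl p X D)
    (b d : ι) : superComm (p b) (p d + 1) (genericSquare p f X b) (D d) =
      -((2 * sgn (p b * (p d + 1))) • adGeneric p f X b d) := by
  rw [superComm_swap, superComm_D_genericSquare hL hW, smul_smul, mul_comm (p d + 1), mul_comm 2]

/-- The matrix form `2 (ad δ₁)² = ad [δ₁, δ₁]` of the Jacobi identity. -/
theorem two_smul_sum_adGeneric_mul_adGeneric (hL : IsLieSuperalgebra p f)
    (hW : IsSuperWeyl p X D) (d c : ι) :
    (2 : ℂ) • ∑ b, sgn (p b) • (adGeneric p f X b c * adGeneric p f X d b) =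
      sgn (p c) • ∑ b, f b d c • genericSquare p f X b := by
  let T (a e : ι) : A := (sgn (p e) * ∑ b, f a b c * f e d b) • (X a * X e)
  have h_left : ∑ b, sgn (p b) • (adGeneric p f X b c * adGeneric p f X d b) =
      sgn (p c) • ∑ a, ∑ e, T a e := by
    have h_sign (a e b : ι) : sgn (p b) * (sgn (p a) * f a b c * (sgn (p e) * f e d b)) =
        sgn (p c) * (sgn (p e) * (f a b c * f e d b)) := by
      linear_combination (sgn (p a) * sgn (p e) * f e d b) * hL.sgn_mul_eq a b c +
        (sgn (p c) * sgn (p e) * f e d b * f a b c) * sgn_mul_sgn_self (p a)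
    have h_term (b : ι) : sgn (p b) • (adGeneric p f X b c * adGeneric p f X d b) =
        ∑ a, ∑ e, (sgn (p c) * (sgn (p e) * (f a b c * f e d b))) • (X a * X e) := by
      rw [adGeneric, adGeneric, Finset.sum_mul_sum]
      simp only [Finset.smul_sum, smul_mul_smul_comm, smul_smul, h_sign]
    simp only [h_term, T, Finset.smul_sum, Finset.mul_sum, Finset.sum_smul, smul_smul]
    rw [Finset.sum_comm]
    exact Finset.sum_congr rfl fun a _ => Finset.sum_comm
  have h_right : ∑ b, f b d c • genericSquare p f X b = ∑ a, ∑ e, (T a e + T e a) := by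
    have h_term (a e : ι) : T a e + T e a =
        (sgn (p e) * ∑ b, f e b a * f b d c) • (X a * X e) := by
      have h_swap := superComm_eq_iff.mp (hW.XX e a)
      simp only [T]
      rw [h_swap, add_zero, smul_smul, ← add_smul, sgn_add_one_mul_add_one, hL.jacobi e a c d]
      congr 1
      linear_combination (-sgn (p e) * sgn (p e * p a) * ∑ b, f e b c * f a d b) *
        sgn_mul_sgn_self (p a)
    simp only [h_term, genericSquare, adGeneric, Finset.smul_sum, Finset.mul_sum, Finset.sum_smul,
      mul_smul_comm, smul_smul]
    rw [Finset.sum_comm]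
    refine Finset.sum_congr rfl fun a _ => Finset.sum_comm.trans ?_
    exact Finset.sum_congr rfl fun e _ => Finset.sum_congr rfl fun b _ => by
      rw [mul_left_comm, mul_comm (f b d c)]
  rw [h_left, h_right]
  simp only [Finset.sum_add_distrib]
  rw [Finset.sum_comm (f := fun a e => T e a), ← two_smul ℂ, smul_comm]

theorem sum_genericSquare_mul_adGeneric_eq_zero (hL : IsLieSuperalgebra p f)
    (hW : IsSuperWeyl p X D) (d : ι) :
    ∑ b, sgn (p b) • (genericSquare p f X b * adGeneric p f X d b) = 0 := by
  have h_commute (b c : ι) : (sgn (p c) * f b d c) • (X c * genericSquare p f X b) =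
      -(sgn (p b) • (genericSquare p f X b * (sgn (p c) * f c d b) • X c)) := by
    rw [superComm_eq_iff.mp (superComm_X_genericSquare hL hW c b), add_zero, mul_smul_comm,
      smul_smul, smul_smul, ← neg_smul, hL.skew b d c, add_one_mul, sgn_add, mul_comm (p c)]
    congr 1
    linear_combination (-sgn (p c) * sgn (p b) * f c d b) * sgn_mul_sgn_self (p b * p c)
  set S := ∑ b, sgn (p b) • (genericSquare p f X b * adGeneric p f X d b) with hS
  have h_two : (2 : ℂ) • S = -S := by
    calc (2 : ℂ) • S
        = ∑ c, X c *
            (2 : ℂ) • ∑ b, sgn (p b) • (adGeneric p f X b c * adGeneric p f X d b) := by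
          simp only [hS, genericSquare, Finset.sum_mul, Finset.mul_sum, Finset.smul_sum,
            mul_smul_comm, mul_assoc]
          exact Finset.sum_comm
      _ = ∑ b, ∑ c, (sgn (p c) * f b d c) • (X c * genericSquare p f X b) := by
          simp only [two_smul_sum_adGeneric_mul_adGeneric hL hW, Finset.smul_sum, Finset.mul_sum,
            mul_smul_comm, smul_smul]
          exact Finset.sum_comm
      _ = -S := by
          simp only [h_commute, Finset.sum_neg_distrib, hS, adGeneric, Finset.mul_sum,
            Finset.smul_sum]
  have h_three : (3 : ℂ) • S = 0 := by
    rw [show (3 : ℂ) = 2 + 1 by norm_num, add_smul, one_smul, h_two, neg_add_cancel]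
  exact (smul_eq_zero.mp h_three).resolve_left three_ne_zero

end Jacobi

section HomologicalField

variable {ι A : Type*} [Fintype ι] [Ring A] [Algebra ℂ A] {p : ι → ZMod 2}
  {f : ι → ι → ι → ℂ} {X D E : ι → A}

theorem superComm_homologicalField (v : ZMod 2) (y : A) :
    superComm 1 v (homologicalField p f X D) y = (1 / 2 : ℂ) • ∑ d, sgn (p d) •
      (genericSquare p f X d * superComm (p d + 1) v (D d) y +
        sgn ((p d + 1) * v) • (superComm (p d) v (genericSquare p f X d) y * D d)) := by
  rw [homologicalField, map_smul, LinearMap.smul_apply, map_sum, LinearMap.sum_apply]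
  congr 1
  refine Finset.sum_congr rfl fun d _ => ?_
  rw [map_smul, LinearMap.smul_apply, superComm_mul_left (self_add_add_one (p d))]

theorem superComm_homologicalField_right (x : A) :
    superComm 1 1 x (homologicalField p f X D) = (1 / 2 : ℂ) • ∑ d, (sgn (p d) •
      (superComm 1 (p d) x (genericSquare p f X d) * D d) +
        genericSquare p f X d * superComm 1 (p d + 1) x (D d)) := by
  rw [homologicalField, map_smul, map_sum]
  congr 1
  refine Finset.sum_congr rfl fun d _ => ?_
  rw [map_smul, superComm_mul_right (self_add_add_one (p d)), one_mul, smul_add, smul_smul,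
    sgn_mul_sgn_self, one_smul]

variable [DecidableEq ι]

theorem superComm_genericElement_homologicalField (hL : IsLieSuperalgebra p f)
    (hU : IsSuperWeylEnveloping p f X D E) :
    superComm 1 1 (genericElement p X E) (homologicalField p f X D) =
      (1 / 2 : ℂ) • ∑ d, genericSquare p f X d * E d := by
  simp only [superComm_homologicalField_right, superComm_genericElement_D hU,
    superComm_genericSquare_eq_zero hL (superComm_genericElement_X hU), zero_mul, smul_zero,
    zero_add]

theorem superComm_homologicalField_genericSquare (hL : IsLieSuperalgebra p f)
    (hW : IsSuperWeyl p X D) (d : ι) :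
    superComm 1 (p d) (homologicalField p f X D) (genericSquare p f X d) = 0 := by
  simp only [superComm_homologicalField, superComm_D_genericSquare hL hW,
    superComm_genericSquare_genericSquare hL hW, zero_mul, smul_zero, add_zero, mul_smul_comm,
    smul_comm _ (2 : ℂ), ← Finset.smul_sum, sum_genericSquare_mul_adGeneric_eq_zero hL hW]

theorem superComm_homologicalField_D (hL : IsLieSuperalgebra p f)
    (hW : IsSuperWeyl p X D) (d : ι) :
    superComm 1 (p d + 1) (homologicalField p f X D) (D d) =
      sgn (p d) • ∑ b, sgn (p b) • (adGeneric p f X b d * D b) := by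
  have h_sign (u v : ZMod 2) :
      sgn u * (sgn ((u + 1) * (v + 1)) * (2 * sgn (u * (v + 1)))) = -(2 * (sgn v * sgn u)) := by
    rw [sgn_add_one_mul_add_one, mul_add_one, sgn_add]
    linear_combination (-2 * sgn u * sgn v * sgn (u * v) ^ 2) * sgn_mul_sgn_self u -
      2 * sgn u * sgn v * sgn_mul_sgn_self (u * v)
  simp only [superComm_homologicalField, hW.DD, superComm_genericSquare_D hL hW, mul_zero,
    zero_add, Finset.smul_sum, neg_mul, smul_neg, smul_mul_assoc, smul_smul, h_sign]
  refine Finset.sum_congr rfl fun b _ => ?_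
  rw [mul_neg, neg_smul, neg_neg]
  congr 1
  ring

theorem superComm_homologicalField_self (hL : IsLieSuperalgebra p f) (hW : IsSuperWeyl p X D) :
    superComm 1 1 (homologicalField p f X D) (homologicalField p f X D) = 0 := by
  have h_swap : ∑ d, genericSquare p f X d *
        (sgn (p d) • ∑ b, sgn (p b) • (adGeneric p f X b d * D b)) =
      ∑ b, sgn (p b) •
        ((∑ d, sgn (p d) • (genericSquare p f X d * adGeneric p f X b d)) * D b) := by
    simp only [Finset.smul_sum, Finset.mul_sum, Finset.sum_mul, mul_smul_comm, smul_mul_assoc,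
      mul_assoc]
    rw [Finset.sum_comm]
    exact Finset.sum_congr rfl fun b _ => Finset.sum_congr rfl fun d _ => smul_comm _ _ _
  rw [superComm_homologicalField_right]
  simp only [superComm_homologicalField_genericSquare hL hW, superComm_homologicalField_D hL hW,
    zero_mul, smul_zero, zero_add, h_swap, sum_genericSquare_mul_adGeneric_eq_zero hL hW,
    Finset.sum_const_zero]

theorem homologicalField_mul_self (hL : IsLieSuperalgebra p f) (hW : IsSuperWeyl p X D) :
    homologicalField p f X D * homologicalField p f X D = 0 := by
  have h_self := superComm_homologicalField_self hL hW
  rw [superComm_one_one, ← two_smul ℂ] at h_self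
  exact (smul_eq_zero.mp h_self).resolve_left two_ne_zero

theorem genericElement_mul_homologicalField_add (hL : IsLieSuperalgebra p f)
    (hU : IsSuperWeylEnveloping p f X D E) :
    genericElement p X E * homologicalField p f X D +
      homologicalField p f X D * genericElement p X E =
        -(genericElement p X E * genericElement p X E) := by
  have h_self := superComm_genericElement_self hU
  have h_cross := superComm_genericElement_homologicalField hL hU
  rw [superComm_one_one, ← two_smul ℂ] at h_self
  rw [superComm_one_one] at h_cross
  rw [h_cross, eq_neg_iff_add_eq_zero, ← neg_eq_iff_eq_neg.mpr h_self]
  module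

theorem homologicalField_eq (hL : IsLieSuperalgebra p f) (hW : IsSuperWeyl p X D) :
    homologicalField p f X D = (1 / 2 : ℂ) • ∑ a, sgn (p a) •
      (X a * -∑ d, ∑ c, (sgn (p a * p c) * f a d c) • (X c * D d)) := by
  have h_sign (a d c : ι) :
      sgn (p d) * (sgn (p a) * f a d c * sgn ((p c + 1) * (p a + 1))) =
        -(sgn (p a) * (sgn (p a * p c) * f a d c)) := by
    rw [sgn_add_one_mul_add_one, mul_comm (p c)]
    linear_combination
      (-sgn (p a) * sgn (p c) * sgn (p a) * sgn (p a * p c)) * hL.sgn_mul_eq a d c -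
        (sgn (p a) * sgn (p c) ^ 2 * sgn (p a * p c) * f a d c) * sgn_mul_sgn_self (p a) -
        (sgn (p a) * sgn (p a * p c) * f a d c) * sgn_mul_sgn_self (p c)
  have h_term (a d c : ι) : sgn (p d) • ((sgn (p a) * f a d c) • (X c * X a) * D d) =
      -(sgn (p a) • (sgn (p a * p c) * f a d c) • (X a * (X c * D d))) := by
    rw [superComm_eq_iff.mp (hW.XX c a), add_zero, smul_smul, smul_mul_assoc, smul_smul,
      smul_smul, h_sign, neg_smul, mul_assoc]
  simp only [homologicalField, genericSquare, adGeneric, Finset.mul_sum, Finset.sum_mul,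
    Finset.smul_sum, mul_smul_comm, mul_neg, smul_neg, h_term, Finset.sum_neg_distrib]
  congr 1
  conv_rhs => rw [Finset.sum_comm]
  exact Finset.sum_congr rfl fun d _ => Finset.sum_comm

end HomologicalField

section WU

variable (p : Λ → ZMod 2) (f : Λ → Λ → Λ → ℂ)

theorem isSuperWeylEnveloping_WU : IsSuperWeylEnveloping p f (XU p f) (DU p f) (EU p f) where
  XX a b := by
    rw [superComm_eq_iff, add_zero]
    simpa only [XU, genWU, map_mul, map_smul] using
      RingQuot.mkAlgHom_rel ℂ (WURel.XX (p := p) (f := f) a b)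
  DD a b := by
    rw [superComm_eq_iff, add_zero]
    simpa only [DU, genWU, map_mul, map_smul] using
      RingQuot.mkAlgHom_rel ℂ (WURel.DD (p := p) (f := f) a b)
  DX a b := by
    rw [superComm_eq_iff]
    simpa only [XU, DU, genWU, map_mul, map_smul, map_add, map_one, map_zero,
      apply_ite (RingQuot.mkAlgHom ℂ (WURel p f))] using
      RingQuot.mkAlgHom_rel ℂ (WURel.DX (p := p) (f := f) a b)
  EE a b := by
    rw [superComm_eq_iff]
    simpa only [EU, genWU, map_mul, map_smul, map_add, map_sum] using
      RingQuot.mkAlgHom_rel ℂ (WURel.EE (p := p) (f := f) a b)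
  EX a b := by
    rw [superComm_eq_iff, add_zero]
    simpa only [XU, EU, genWU, map_mul, map_smul] using
      RingQuot.mkAlgHom_rel ℂ (WURel.EX (p := p) (f := f) a b)
  ED a b := by
    rw [superComm_eq_iff, add_zero]
    simpa only [DU, EU, genWU, map_mul, map_smul] using
      RingQuot.mkAlgHom_rel ℂ (WURel.ED (p := p) (f := f) a b)

variable {p f}

theorem genWU_mem_WUpar (s : WUGen Λ) : genWU p f s ∈ WUpar p f (s.parity p) :=
  Submodule.subset_span ⟨[s], by simp, by simp⟩

theorem mul_mem_WUpar {u v : ZMod 2} {x y : WU p f} (hx : x ∈ WUpar p f u)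
    (hy : y ∈ WUpar p f v) : x * y ∈ WUpar p f (u + v) := by
  have hxy := Submodule.mul_mem_mul hx hy
  rw [WUpar, WUpar, Submodule.span_mul_span] at hxy
  refine Submodule.span_mono ?_ hxy
  rintro _ ⟨_, ⟨l, rfl, hl⟩, _, ⟨m, rfl, hm⟩, rfl⟩
  exact ⟨l ++ m, by simp, by simp [hl, hm]⟩

theorem delta1_mem_WUpar : delta1 p f ∈ WUpar p f 1 := by
  refine Submodule.sum_mem _ fun a _ => Submodule.smul_mem _ _ ?_
  rw [← add_one_add_self (p a)]
  exact mul_mem_WUpar (genWU_mem_WUpar (.X a)) (genWU_mem_WUpar (.E a))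

theorem GamU_mem_WUpar (hL : IsLieSuperalgebra p f) (a : Λ) : GamU p f a ∈ WUpar p f (p a) := by
  have h_parity (u v : ZMod 2) : v + 1 + (u + v + 1) = u := by decide +revert
  refine Submodule.neg_mem _ (Submodule.sum_mem _ fun b _ => Submodule.sum_mem _ fun c _ => ?_)
  rcases eq_or_ne (f a b c) 0 with h | h
  · rw [h, mul_zero, zero_smul]
    exact Submodule.zero_mem _
  · rw [← h_parity (p a) (p c), ← hL.parity a b c h]
    exact Submodule.smul_mem _ _ (mul_mem_WUpar (genWU_mem_WUpar (.X c)) (genWU_mem_WUpar (.D b)))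

theorem delta2_mem_WUpar (hL : IsLieSuperalgebra p f) : delta2 p f ∈ WUpar p f 1 := by
  refine Submodule.smul_mem _ _ (Submodule.sum_mem _ fun a _ => Submodule.smul_mem _ _ ?_)
  rw [← add_one_add_self (p a)]
  exact mul_mem_WUpar (genWU_mem_WUpar (.X a)) (GamU_mem_WUpar hL a)

end WU

/-- Lemma 3.7 of the paper (the key BRST lemma): writing `[x,y] = xy + yx` for the
super-commutator of the odd elements `δ₁, δ₂`, we have
`[δ₁,δ₂] + [δ₂,δ₁] = -[δ₁,δ₁]`, `[δ₂,δ₂] = 0`, and hence `(δ₁ + δ₂)² = 0`.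
(The elements `δ₁, δ₂` are indeed odd: they lie in the odd homogeneous subspace.) -/
theorem delta_squares_to_zero
    (p : Λ → ZMod 2) (f : Λ → Λ → Λ → ℂ)
    (hpar : ∀ a b c, f a b c ≠ 0 → p b = p a + p c)
    (hskew : ∀ a b c, f a b c = -sgn (p a * p c) * f c b a)
    (hjac : ∀ a b c d, ∑ e : Λ, f b e c * f a d e =
      ∑ e : Λ, f a e b * f e d c + sgn (p a * p b) * ∑ e : Λ, f a e c * f b d e) :
    -- δ₁ and δ₂ are odd:
    delta1 p f ∈ WUpar p f 1 ∧
    delta2 p f ∈ WUpar p f 1 ∧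
    -- [δ₁, δ₂] + [δ₂, δ₁] = -[δ₁, δ₁]:
    (delta1 p f * delta2 p f + delta2 p f * delta1 p f)
        + (delta2 p f * delta1 p f + delta1 p f * delta2 p f)
      = -(delta1 p f * delta1 p f + delta1 p f * delta1 p f) ∧
    -- [δ₂, δ₂] = 0:
    delta2 p f * delta2 p f + delta2 p f * delta2 p f = 0 ∧
    -- δ² = 0:
    deltaWU p f * deltaWU p f = 0 := by
  have hL : IsLieSuperalgebra p f := ⟨hpar, hskew, hjac⟩
  have hU := isSuperWeylEnveloping_WU p f
  have hδ₂ : delta2 p f = homologicalField p f (XU p f) (DU p f) :=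
    (homologicalField_eq hL hU.toIsSuperWeyl).symm
  have h₁₂ : delta1 p f * delta2 p f + delta2 p f * delta1 p f = -(delta1 p f * delta1 p f) := by
    rw [hδ₂]
    exact genericElement_mul_homologicalField_add hL hU
  have h₂₂ : delta2 p f * delta2 p f = 0 := by
    rw [hδ₂]
    exact homologicalField_mul_self hL hU.toIsSuperWeyl
  refine ⟨delta1_mem_WUpar, delta2_mem_WUpar hL, ?_, ?_, ?_⟩
  · rw [add_comm (delta2 p f * delta1 p f), h₁₂, neg_add]
  · rw [h₂₂, add_zero]
  · rw [deltaWU, add_mul, mul_add, mul_add, h₂₂, add_zero, add_assoc, h₁₂, add_neg_cancel]
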